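/- Let M be a horizontally linked R-module of finite and positive G-dimension, and set n = rgr(M). Then Ass_R(Ext^n_R(M,R)) = { p ∈ Spec R : Gdim_{R_p}(M_p) ≠ 0, depth_{R_p}((λM)_p) = n = rgr_{R_p}(M_p) }. -/

import Mathlib

open CategoryTheory

noncomputable section

universe u

/-- The `i`-th Ext group `Ext^i_R(M,N)`, as a type (with its `R`-module structure). -/
abbrev extM (R : Type u) [CommRing R] (i : ℕ) (M N : Type u) [AddCommGroup M] [Module R M]
    [AddCommGroup N] [Module R N] : Type u :=
  ((Ext R (ModuleCat.{u} R) i).obj (Opposite.op (ModuleCat.of R M))).obj (ModuleCat.of R N)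

/-- The `i`-th Tor group `Tor^R_i(M,N)`, as a type. -/
abbrev torM (R : Type u) [CommRing R] (i : ℕ) (M N : Type u) [AddCommGroup M] [Module R M]
    [AddCommGroup N] [Module R N] : Type u :=
  ((Tor (ModuleCat.{u} R) i).obj (ModuleCat.of R M)).obj (ModuleCat.of R N)

/-- The `i`-th local cohomology `H^i_I(M)`, as a type. -/
abbrev locCoh (R : Type u) [CommRing R] (I : Ideal R) (i : ℕ) (M : Type u) [AddCommGroup M]
    [Module R M] : Type u :=
  (localCohomology I i).obj (ModuleCat.of R M)

/-- A submodule `N ≤ M` is superfluous if `K ⊔ N = ⊤` implies `K = ⊤`. -/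
def Submodule.IsSuperfluous {R M : Type u} [CommRing R] [AddCommGroup M] [Module R M]
    (N : Submodule R M) : Prop :=
  ∀ K : Submodule R M, K ⊔ N = ⊤ → K = ⊤

/-- A minimal projective resolution of `M` by finitely generated projective modules:
each `P i → Ω^i M` is a projective cover (i.e. has superfluous kernel). -/
structure MinRes (R : Type u) [CommRing R] (M : Type u) [AddCommGroup M] [Module R M] where
  P : ℕ → ModuleCat.{u} R
  projective : ∀ i, Module.Projective R (P i)
  finite : ∀ i, Module.Finite R (P i)
  d : (i : ℕ) → (↥(P (i + 1)) →ₗ[R] ↥(P i))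
  ε : ↥(P 0) →ₗ[R] M
  surj : Function.Surjective ε
  exact0 : LinearMap.range (d 0) = LinearMap.ker ε
  exact : ∀ i, LinearMap.range (d (i + 1)) = LinearMap.ker (d i)
  min_eps : (LinearMap.ker ε).IsSuperfluous
  min_d : ∀ i, (LinearMap.ker (d i)).IsSuperfluous

namespace MinRes

variable {R M : Type u} [CommRing R] [AddCommGroup M] [Module R M]

/-- `T k F` is the Auslander-Bridger transpose `𝒯_{k+1} M = Tr Ω^k M`, computed as the
cokernel of `P_k* → P_{k+1}*`. -/
def T (F : MinRes R M) (k : ℕ) : Type u :=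
  (Module.Dual R ↥(F.P (k + 1))) ⧸ LinearMap.range (F.d k).dualMap

instance (F : MinRes R M) (k : ℕ) : AddCommGroup (F.T k) :=
  inferInstanceAs (AddCommGroup ((Module.Dual R ↥(F.P (k + 1))) ⧸
    LinearMap.range (F.d k).dualMap))

instance (F : MinRes R M) (k : ℕ) : Module R (F.T k) :=
  inferInstanceAs (Module R ((Module.Dual R ↥(F.P (k + 1))) ⧸
    LinearMap.range (F.d k).dualMap))

/-- The transpose `Tr M = coker(P₀* → P₁*)` computed from a minimal projective presentation. -/
abbrev Tr (F : MinRes R M) : Type u := F.T 0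

/-- `λM = ΩTr M`, realized as the image of `P₀* → P₁*` for a minimal projective
presentation `P₁ → P₀ → M → 0`. -/
def lambdaMod (F : MinRes R M) : Type u :=
  ↥(LinearMap.range (F.d 0).dualMap)

instance (F : MinRes R M) : AddCommGroup F.lambdaMod :=
  inferInstanceAs (AddCommGroup ↥(LinearMap.range (F.d 0).dualMap))

instance (F : MinRes R M) : Module R F.lambdaMod :=
  inferInstanceAs (Module R ↥(LinearMap.range (F.d 0).dualMap))

end MinRes

/-- `M` is a horizontally linked `R`-module, i.e. `M ≅ λλM`. -/
def IsHorizontallyLinked (R : Type u) [CommRing R] (M : Type u) [AddCommGroup M]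
    [Module R M] : Prop :=
  ∃ (F : MinRes R M) (G : MinRes R F.lambdaMod), Nonempty (G.lambdaMod ≃ₗ[R] M)

/-- `M` and `N` are horizontally linked to each other: `M ≅ λN` and `N ≅ λM`. -/
def MutuallyLinked (A : Type u) [CommRing A] (M N : Type u) [AddCommGroup M] [Module A M]
    [AddCommGroup N] [Module A N] : Prop :=
  ∃ (F : MinRes A M) (G : MinRes A N),
    Nonempty (F.lambdaMod ≃ₗ[A] N) ∧ Nonempty (G.lambdaMod ≃ₗ[A] M)

/-- `M` is linked to `N` by the ideal `c`: `c` annihilates both modules and they are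
horizontally linked to each other as `R ⧸ c`-modules. -/
def LinkedBy (R : Type u) [CommRing R] (c : Ideal R) (M N : Type u) [AddCommGroup M]
    [Module R M] [AddCommGroup N] [Module R N] : Prop :=
  ∃ (hM : Module.IsTorsionBySet R M c) (hN : Module.IsTorsionBySet R N c),
    letI := hM.module
    letI := hN.module
    MutuallyLinked (R ⧸ c) M N

/-- A stable module: no nonzero projective direct summand. -/
def IsStableModule (R : Type u) [CommRing R] (M : Type u) [AddCommGroup M] [Module R M] : Prop :=
  ∀ N : Submodule R M, Module.Projective R ↥N → (∃ N' : Submodule R M, IsCompl N N') → N = ⊥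

/-- `M` has G-dimension zero: `M` is finitely generated and reflexive,
and `Ext^i(M,R) = 0 = Ext^i(M*,R)` for all `i > 0`. -/
def IsGDimZero (R : Type u) [CommRing R] (M : Type u) [AddCommGroup M] [Module R M] : Prop :=
  Module.Finite R M ∧ Function.Bijective (Module.Dual.eval R M) ∧
    (∀ i : ℕ, 0 < i → Subsingleton (extM R i M R)) ∧
    (∀ i : ℕ, 0 < i → Subsingleton (extM R i (Module.Dual R M) R))

/-- `M` admits a resolution of length `≤ n` by modules of G-dimension zero. -/
def GDimLE (R : Type u) [CommRing R] : ℕ → ModuleCat.{u} R → Prop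
  | 0, M => IsGDimZero R ↥M
  | n + 1, M =>
    ∃ (G : ModuleCat.{u} R) (f : ↥G →ₗ[R] ↥M), IsGDimZero R ↥G ∧ Function.Surjective f ∧
      GDimLE R n (ModuleCat.of R ↥(LinearMap.ker f))

/-- The G-dimension of `M`: the minimal length of a resolution of `M` by modules of
G-dimension zero (`∞` if there is none). -/
def GDim (R : Type u) [CommRing R] (M : Type u) [AddCommGroup M] [Module R M] : ℕ∞ :=
  sInf {n : ℕ∞ | ∃ k : ℕ, n = k ∧ GDimLE R k (ModuleCat.of R M)}

/-- The reduced grade of `M`: `rgr M = inf{ i > 0 | Ext^i(M,R) ≠ 0 }`. -/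
def rgr (R : Type u) [CommRing R] (M : Type u) [AddCommGroup M] [Module R M] : ℕ∞ :=
  sInf {n : ℕ∞ | ∃ k : ℕ, n = k ∧ 0 < k ∧ ¬ Subsingleton (extM R k M R)}

/-- The grade of `M`: `gr M = inf{ i ≥ 0 | Ext^i(M,R) ≠ 0 }`. -/
def egrade (R : Type u) [CommRing R] (M : Type u) [AddCommGroup M] [Module R M] : ℕ∞ :=
  sInf {n : ℕ∞ | ∃ k : ℕ, n = k ∧ ¬ Subsingleton (extM R k M R)}

/-- `depth_I(M) = inf{ i | Ext^i(R/I, M) ≠ 0 }`; for `I` the maximal ideal of a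
local ring this is the depth of `M`. -/
def edepth (R : Type u) [CommRing R] (I : Ideal R) (M : Type u) [AddCommGroup M]
    [Module R M] : ℕ∞ :=
  sInf {n : ℕ∞ | ∃ k : ℕ, n = k ∧ ¬ Subsingleton (extM R k (R ⧸ I) M)}

/-- The depth of the local ring `R`. -/
def rdepth (R : Type u) [CommRing R] [IsLocalRing R] : ℕ∞ :=
  edepth R (IsLocalRing.maximalIdeal R) R

/-- `depth_{R_p}(M_p)`. -/
def locDepth (R : Type u) [CommRing R] (p : Ideal R) [p.IsPrime] (M : Type u) [AddCommGroup M]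
    [Module R M] : ℕ∞ :=
  edepth (Localization.AtPrime p) (IsLocalRing.maximalIdeal (Localization.AtPrime p))
    (LocalizedModule p.primeCompl M)

/-- `depth R_p`. -/
def locRingDepth (R : Type u) [CommRing R] (p : Ideal R) [p.IsPrime] : ℕ∞ :=
  rdepth (Localization.AtPrime p)

/-- `Gdim_{R_p}(M_p)`. -/
def locGDim (R : Type u) [CommRing R] (p : Ideal R) [p.IsPrime] (M : Type u) [AddCommGroup M]
    [Module R M] : ℕ∞ :=
  GDim (Localization.AtPrime p) (LocalizedModule p.primeCompl M)

/-- `rgr_{R_p}(M_p)`. -/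
def locRgr (R : Type u) [CommRing R] (p : Ideal R) [p.IsPrime] (M : Type u) [AddCommGroup M]
    [Module R M] : ℕ∞ :=
  rgr (Localization.AtPrime p) (LocalizedModule p.primeCompl M)

/-- `dim_{R_p}(M_p)`, the Krull dimension of the support of `M_p` over `R_p`. -/
def locDim (R : Type u) [CommRing R] (p : Ideal R) [p.IsPrime] (M : Type u) [AddCommGroup M]
    [Module R M] : WithBot ℕ∞ :=
  ringKrullDim ((Localization.AtPrime p) ⧸
    Module.annihilator (Localization.AtPrime p) (LocalizedModule p.primeCompl M))

/-- `M` satisfies the condition `S̃_k`: `depth_{R_p}(M_p) ≥ min{k, depth R_p}` for all primes. -/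
def Stilde (R : Type u) [CommRing R] (k : ℕ) (M : Type u) [AddCommGroup M] [Module R M] : Prop :=
  ∀ (p : Ideal R) (_ : p.IsPrime), min (k : ℕ∞) (locRingDepth R p) ≤ locDepth R p M

/-- `M` satisfies Serre's condition `(S_k)`:
`depth_{R_p}(M_p) ≥ min{k, dim_{R_p}(M_p)}` for all primes. -/
def SerreS (R : Type u) [CommRing R] (k : ℕ) (M : Type u) [AddCommGroup M] [Module R M] : Prop :=
  ∀ (p : Ideal R) (_ : p.IsPrime),
    min (k : WithBot ℕ∞) (locDim R p M) ≤ (locDepth R p M : WithBot ℕ∞)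

/-- `M` is a `k`-th syzygy module. -/
def IsKthSyzygy (R : Type u) [CommRing R] : ℕ → ModuleCat.{u} R → Prop
  | 0, _ => True
  | k + 1, M =>
    ∃ (P : ModuleCat.{u} R) (f : ↥M →ₗ[R] ↥P), Module.Projective R ↥P ∧ Module.Finite R ↥P ∧
      Function.Injective f ∧ IsKthSyzygy R k (ModuleCat.of R (↥P ⧸ LinearMap.range f))

/-- The `I`-torsion submodule `Γ_I(M) = { x | I^n x = 0 for some n }`. -/
def gammaTorsion (R : Type u) [CommRing R] (I : Ideal R) (M : Type u) [AddCommGroup M]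
    [Module R M] : Submodule R M where
  carrier := {x | ∃ n : ℕ, ∀ a ∈ I ^ n, a • x = 0}
  zero_mem' := ⟨0, fun a _ => smul_zero a⟩
  add_mem' := by
    rintro x y ⟨n, hn⟩ ⟨m, hm⟩
    exact ⟨n + m, fun a ha => by
      rw [smul_add, hn a (Ideal.pow_le_pow_right (Nat.le_add_right n m) ha),
        hm a (Ideal.pow_le_pow_right (Nat.le_add_left m n) ha), add_zero]⟩
  smul_mem' := by
    rintro c x ⟨n, hn⟩
    exact ⟨n, fun a ha => by rw [smul_comm, hn a ha, smul_zero]⟩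

/-- `N` has finite flat dimension (characterized by uniform vanishing of `Tor`). -/
def HasFiniteFlatDim (R : Type u) [CommRing R] (N : Type u) [AddCommGroup N] [Module R N] : Prop :=
  ∃ n : ℕ, ∀ i : ℕ, n < i → ∀ (M : ModuleCat.{u} R), Subsingleton (torM R i ↥M N)

/-- `N` has finite injective dimension (characterized by uniform vanishing of `Ext`). -/
def HasFiniteInjDim (R : Type u) [CommRing R] (N : Type u) [AddCommGroup N] [Module R N] : Prop :=
  ∃ n : ℕ, ∀ i : ℕ, n < i → ∀ (M : ModuleCat.{u} R), Subsingleton (extM R i ↥M N)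

/-- `K` is a semidualizing `R`-module. -/
def IsSemidualizing (R : Type u) [CommRing R] (K : Type u) [AddCommGroup K] [Module R K] : Prop :=
  Module.Finite R K ∧ Function.Bijective (LinearMap.lsmul R K) ∧
    ∀ i : ℕ, 0 < i → Subsingleton (extM R i K K)

/-- The biduality map `M → Hom(Hom(M,K),K)`. -/
def evalK (R : Type u) [CommRing R] (K M : Type u) [AddCommGroup K] [Module R K]
    [AddCommGroup M] [Module R M] : M →ₗ[R] ((M →ₗ[R] K) →ₗ[R] K) :=
  LinearMap.applyₗ

/-- `M` has `G_K`-dimension zero. -/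
def IsGKDimZero (R : Type u) [CommRing R] (K M : Type u) [AddCommGroup K] [Module R K]
    [AddCommGroup M] [Module R M] : Prop :=
  Module.Finite R M ∧ Function.Bijective (evalK R K M) ∧
    (∀ i : ℕ, 0 < i → Subsingleton (extM R i M K)) ∧
    (∀ i : ℕ, 0 < i → Subsingleton (extM R i (M →ₗ[R] K) K))

/-- `M` admits a resolution of length `≤ n` by modules of `G_K`-dimension zero. -/
def GKDimLE (R : Type u) [CommRing R] (K : Type u) [AddCommGroup K] [Module R K] :
    ℕ → ModuleCat.{u} R → Prop
  | 0, M => IsGKDimZero R K ↥M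
  | n + 1, M =>
    ∃ (G : ModuleCat.{u} R) (f : ↥G →ₗ[R] ↥M), IsGKDimZero R K ↥G ∧ Function.Surjective f ∧
      GKDimLE R K n (ModuleCat.of R ↥(LinearMap.ker f))

/-- The `G_K`-dimension of `M`. -/
def GKDim (R : Type u) [CommRing R] (K M : Type u) [AddCommGroup K] [Module R K]
    [AddCommGroup M] [Module R M] : ℕ∞ :=
  sInf {n : ℕ∞ | ∃ k : ℕ, n = k ∧ GKDimLE R K k (ModuleCat.of R M)}

/-- The grade of a module, `gr_R(M) = grade(Ann_R(M), R) = inf{i | Ext^i(R/Ann M, R) ≠ 0}`. -/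
def grAnn (R : Type u) [CommRing R] (M : Type u) [AddCommGroup M] [Module R M] : ℕ∞ :=
  egrade R (R ⧸ Module.annihilator R M)

/-- The grade of an ideal, `grade(I) = inf{i | Ext^i(R/I, R) ≠ 0}`. -/
def gradeI (R : Type u) [CommRing R] (I : Ideal R) : ℕ∞ :=
  egrade R (R ⧸ I)

/-- The ideal `I` is `G_K`-Gorenstein: `R/I` is `G_K`-perfect and `Ext^{gr I}(R/I, K)` is
cyclic. -/
def IsGKGorensteinIdeal (R : Type u) [CommRing R] (K : Type u) [AddCommGroup K] [Module R K]
    (I : Ideal R) : Prop :=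
  ∃ n : ℕ, grAnn R (R ⧸ I) = (n : ℕ∞) ∧ GKDim R K (R ⧸ I) = (n : ℕ∞) ∧
    ∃ x : extM R n (R ⧸ I) K, Submodule.span R {x} = ⊤

end

/-!
Write `λM` as the cokernel of `M* → P₀*`. Dualizing a projective resolution of `M` and using that
`Ext^i(M, R)` vanishes for `0 < i < n = rgr M`, one obtains exact sequences that shift
`Ext^n(X, λM)` down to `Hom(X, Ext^n(M, R))` and show that `Ext^i(X, λM) = 0` for `i < n`, provided
that `Ext^i(X, R) = 0` for `i ≤ n`. After localizing at a prime, apply this to the residue field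
`X = k`: it says that `depth λM = n` if and only if the maximal ideal is associated to
`Ext^n(M, R)`.

The proviso says that the local ring has depth greater than `n`. A horizontally linked module is a
submodule of a projective module `Q`, and `Ext^{n+1}(Q / M, R) = Ext^n(M, R) ≠ 0`, so that
`Gdim (Q / M) > n`. The Auslander–Bridger formula `Gdim N + depth N = depth R` for `N = Q / M` then
gives the bound.
-/

open Limits Abelian

/-- `Ext^i_R(X, Y)` as Yoneda-type extensions in the derived category. It is isomorphic to `extM`
(see `extMLinearEquiv`) and comes with Mathlib's long exact sequences. -/
abbrev ModExt (R : Type u) [CommRing R] (X Y : Type u) [AddCommGroup X] [Module R X]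
    [AddCommGroup Y] [Module R Y] (i : ℕ) : Type u :=
  Abelian.Ext.{u} (ModuleCat.of R X) (ModuleCat.of R Y) i

section Comparison

variable {R : Type u} [CommRing R] {X : Type u} [AddCommGroup X] [Module R X]
  (Y : Type u) [AddCommGroup Y] [Module R Y]

noncomputable instance preservesLimits_linearYoneda (Y : ModuleCat.{u} R) :
    PreservesLimits ((linearYoneda R (ModuleCat.{u} R)).obj Y) :=
  have : PreservesLimits ((linearYoneda R (ModuleCat.{u} R)).obj Y ⋙ forget _) :=
    inferInstanceAs (PreservesLimits (yoneda.obj Y))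
  preservesLimits_of_reflects_of_preserves _ (forget _)

variable (X) in
/-- `Ext^0` is `Hom`, because `Hom(-, Y)` is left exact. -/
noncomputable def extMZeroLinearEquiv : extM R 0 X Y ≃ₗ[R] ModExt R X Y 0 :=
  let homY := ((linearYoneda R (ModuleCat.{u} R)).obj (ModuleCat.of R Y)).rightOp
  have : PreservesFiniteColimits homY := preservesFiniteColimits_rightOp _
  (homY.leftDerivedZeroIsoSelf.app (.of R X)).unop.symm.toLinearEquiv ≪≫ₗ
    Abelian.Ext.linearEquiv₀.symm

lemma smul_extMk {X Y : ModuleCat.{u} R} (P : ProjectiveResolution X) (r : R) {i : ℕ}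
    (f : P.complex.X i ⟶ Y) (hf : P.complex.d (i + 1) i ≫ f = 0) :
    P.extMk (r • f) (i + 1) rfl (by rw [Linear.comp_smul, hf, smul_zero]) =
      r • P.extMk f (i + 1) rfl hf := by
  rw [Abelian.Ext.smul_eq_comp_mk₀, P.extMk_comp_mk₀]
  congr 1

/-- The class in `Ext^{i+1}(X, Y)` of a cocycle of `Hom(P, Y)`, for a projective resolution `P`
of `X`. -/
noncomputable def extClassOfCocycle (P : ProjectiveResolution (ModuleCat.of R X)) (i : ℕ) :
    LinearMap.ker
        ((P.complex.linearYonedaObj R (ModuleCat.of R Y)).sc' i (i + 1) (i + 2)).g.hom →ₗ[R]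
      ModExt R X Y (i + 1) where
  toFun f := P.extMk (Y := ModuleCat.of R Y) f.1 (i + 2) rfl f.2
  map_add' f g := (P.add_extMk (Y := ModuleCat.of R Y) f.1 g.1 (i + 2) rfl f.2 g.2).symm
  map_smul' r f := smul_extMk (Y := ModuleCat.of R Y) P r f.1 f.2

lemma extClassOfCocycle_surjective (P : ProjectiveResolution (ModuleCat.of R X)) (i : ℕ) :
    Function.Surjective (extClassOfCocycle Y P i) := fun x =>
  let ⟨f, hf, hx⟩ := P.extMk_surjective x (i + 2) rfl
  ⟨⟨f, hf⟩, hx⟩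

lemma ker_extClassOfCocycle (P : ProjectiveResolution (ModuleCat.of R X)) (i : ℕ) :
    LinearMap.ker (extClassOfCocycle Y P i) = LinearMap.range
      ((P.complex.linearYonedaObj R (ModuleCat.of R Y)).sc' i (i + 1) (i + 2)).moduleCatToCycles :=
  Submodule.ext fun f =>
    (P.extMk_eq_zero_iff (Y := ModuleCat.of R Y) f.1 (i + 2) rfl f.2 i rfl).trans
      (exists_congr fun _ => ⟨fun h => Subtype.ext h, fun h => congrArg Subtype.val h⟩)

variable (X) in
/-- The derived functors `extM` agree with `ModExt` in positive degree: both are the cohomology of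
`Hom(P, Y)` for a projective resolution `P` of `X`. -/
noncomputable def extMSuccLinearEquiv (i : ℕ) : extM R (i + 1) X Y ≃ₗ[R] ModExt R X Y (i + 1) :=
  let P := ProjectiveResolution.of (ModuleCat.of R X)
  let K := P.complex.linearYonedaObj R (ModuleCat.of R Y)
  (P.isoExt (R := R) (i + 1) (ModuleCat.of R Y) ≪≫
      ShortComplex.homologyMapIso (K.isoSc' i (i + 1) (i + 2) (by simp) (by simp)) ≪≫
      (K.sc' i (i + 1) (i + 2)).moduleCatHomologyIso).toLinearEquiv ≪≫ₗ
    Submodule.quotEquivOfEq _ _ (ker_extClassOfCocycle Y P i).symm ≪≫ₗ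
    (extClassOfCocycle Y P i).quotKerEquivOfSurjective
      (extClassOfCocycle_surjective Y P i)

variable (X) in
/-- The two constructions of `Ext` agree. -/
noncomputable def extMLinearEquiv : ∀ i : ℕ, extM R i X Y ≃ₗ[R] ModExt R X Y i
  | 0 => extMZeroLinearEquiv X Y
  | i + 1 => extMSuccLinearEquiv X Y i

lemma subsingleton_extM_iff (i : ℕ) :
    Subsingleton (extM R i X Y) ↔ Subsingleton (ModExt R X Y i) :=
  (extMLinearEquiv X Y i).toEquiv.subsingleton_congr

end Comparison

section ExtMap

variable {R : Type u} [CommRing R] (X : Type u) {Y A B C : Type u}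
  [AddCommGroup X] [Module R X] [AddCommGroup Y] [Module R Y] [AddCommGroup A] [Module R A]
  [AddCommGroup B] [Module R B] [AddCommGroup C] [Module R C] (i : ℕ)

/-- Functoriality `Hom(A, B) → Hom(Ext^i(X, A), Ext^i(X, B))` of `Ext` in its second variable,
bundled as a linear map. -/
noncomputable def extMap : (A →ₗ[R] B) →ₗ[R] ModExt R X A i →ₗ[R] ModExt R X B i :=
  (Abelian.Ext.bilinearCompOfLinear R (ModuleCat.of R X) (ModuleCat.of R A) (ModuleCat.of R B)
      i 0 i (add_zero i)).flip ∘ₗ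
    ((ModuleCat.homLinearEquiv (M := ModuleCat.of R A) (N := ModuleCat.of R B) (S := R)).symm ≪≫ₗ
      Abelian.Ext.linearEquiv₀.symm).toLinearMap

variable {X i}

lemma extMap_apply (f : A →ₗ[R] B) (x : ModExt R X A i) :
    extMap X i f x = x.comp (Abelian.Ext.mk₀ (ModuleCat.ofHom f)) (add_zero i) :=
  rfl

lemma extMap_comp (g : B →ₗ[R] C) (f : A →ₗ[R] B) (x : ModExt R X A i) :
    extMap X i (g ∘ₗ f) x = extMap X i g (extMap X i f x) := by
  simp only [extMap_apply]
  rw [Ext.comp_assoc_of_third_deg_zero, Ext.mk₀_comp_mk₀, ModuleCat.ofHom_comp]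

lemma extMap_id (x : ModExt R X A i) : extMap X i LinearMap.id x = x :=
  Ext.comp_mk₀_id x

variable (X i) in
/-- Isomorphic modules have isomorphic `Ext` in the second variable. -/
noncomputable def extCongrRight (e : A ≃ₗ[R] B) : ModExt R X A i ≃ₗ[R] ModExt R X B i :=
  LinearEquiv.ofLinearMap (extMap X i e.toLinearMap) (extMap X i e.symm.toLinearMap)
    (LinearMap.ext fun x => by
      rw [LinearMap.comp_apply, ← extMap_comp, e.comp_symm, extMap_id, LinearMap.id_apply])
    (LinearMap.ext fun x => by
      rw [LinearMap.comp_apply, ← extMap_comp, e.symm_comp, extMap_id, LinearMap.id_apply])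

lemma precomp_mk₀_comp (f : A →ₗ[R] B) (g : B →ₗ[R] C) (x : ModExt R C Y i) :
    (Ext.mk₀ (ModuleCat.ofHom f)).comp
        ((Ext.mk₀ (ModuleCat.ofHom g)).comp x (zero_add i)) (zero_add i) =
      (Ext.mk₀ (ModuleCat.ofHom (g ∘ₗ f))).comp x (zero_add i) := by
  rw [Ext.mk₀_comp_mk₀_assoc, ModuleCat.ofHom_comp]

variable (Y i) in
/-- Isomorphic modules have isomorphic `Ext` in the first variable. -/
noncomputable def extCongrLeft (e : A ≃ₗ[R] B) : ModExt R A Y i ≃ₗ[R] ModExt R B Y i :=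
  LinearEquiv.ofLinearMap
    ((Ext.mk₀ (ModuleCat.ofHom e.symm.toLinearMap)).precompOfLinear R _ (zero_add i))
    ((Ext.mk₀ (ModuleCat.ofHom e.toLinearMap)).precompOfLinear R _ (zero_add i))
    (LinearMap.ext fun x => (precomp_mk₀_comp e.symm.toLinearMap e.toLinearMap x).trans <| by
      rw [e.comp_symm]; exact Ext.mk₀_id_comp x)
    (LinearMap.ext fun x => (precomp_mk₀_comp e.toLinearMap e.symm.toLinearMap x).trans <| by
      rw [e.symm_comp]; exact Ext.mk₀_id_comp x)

lemma smul_eq_zero_of_mem_annihilator {r : R} (hr : r ∈ Module.annihilator R X)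
    (x : ModExt R X Y i) : r • x = 0 := by
  have hr_id : r • 𝟙 (ModuleCat.of R X) = 0 := by
    ext x
    exact Module.mem_annihilator.1 hr x
  rw [← Ext.mk₀_id_comp (r • x), Ext.comp_smul, ← Ext.smul_comp, ← Ext.mk₀_smul, hr_id,
    Ext.mk₀_zero, Ext.zero_comp]

lemma extMap_zero_injective {f : A →ₗ[R] B} (hf : Function.Injective f) :
    Function.Injective (extMap X 0 f) :=
  have : Mono (ModuleCat.ofHom f) := (ModuleCat.mono_iff_injective _).2 hf
  Ext.postcomp_mk₀_injective_of_mono (ModuleCat.of R X) (ModuleCat.ofHom f)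

lemma subsingleton_modExt_succ_of_projective [Module.Projective R X] :
    Subsingleton (ModExt R X Y (i + 1)) :=
  have : Projective (ModuleCat.of R X) := (IsProjective.iff_projective (R := R) X).1 inferInstance
  subsingleton_of_forall_eq 0 Ext.eq_zero_of_projective

end ExtMap

section ExtDualPairing

variable {R : Type u} [CommRing R] (X Y : Type u) {Z : Type u} [AddCommGroup X] [Module R X]
  [AddCommGroup Y] [Module R Y] [AddCommGroup Z] [Module R Z] (i : ℕ)

/-- The natural map `Ext^i(X, Y*) → Hom(Y, Ext^i(X, R))`, sending `β` to the map
`y ↦ Ext^i(X, ev_y) β`. -/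
noncomputable def extDualPairing :
    ModExt R X (Module.Dual R Y) i →ₗ[R] Y →ₗ[R] ModExt R X R i :=
  (extMap X i ∘ₗ Module.Dual.eval R Y).flip

variable {X Y i}

lemma extDualPairing_apply (β : ModExt R X (Module.Dual R Y) i) (y : Y) :
    extDualPairing X Y i β y = extMap X i (Module.Dual.eval R Y y) β :=
  rfl

lemma extDualPairing_dualMap (φ : Y →ₗ[R] Z) (β : ModExt R X (Module.Dual R Z) i) :
    extDualPairing X Y i (extMap X i φ.dualMap β) = extDualPairing X Z i β ∘ₗ φ := by
  ext y
  exact (extMap_comp _ _ _).symm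

lemma exists_dual_family [Module.Finite R Y] [Module.Projective R Y] :
    ∃ (n : ℕ) (b : Fin n → Y) (f : Fin n → Module.Dual R Y), ∀ y, ∑ j, f j y • b j = y := by
  obtain ⟨n, π, hπ⟩ := Module.Finite.exists_fin' R Y
  obtain ⟨σ, hσ⟩ := Module.projective_lifting_property π LinearMap.id hπ
  refine ⟨n, fun j => π (Pi.single j 1), fun j => LinearMap.proj j ∘ₗ σ, fun y => ?_⟩
  calc ∑ j, σ y j • π (Pi.single j 1) = π (σ y) := by
        conv_rhs => rw [pi_eq_sum_univ' (σ y)]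
        simp
    _ = y := LinearMap.congr_fun hσ y

theorem extDualPairing_bijective_of_projective [Module.Finite R Y] [Module.Projective R Y] :
    Function.Bijective (extDualPairing (R := R) X Y i) := by
  obtain ⟨n, b, f, hbf⟩ := exists_dual_family (R := R) (Y := Y)
  have id_dual : (LinearMap.id : Module.Dual R Y →ₗ[R] Module.Dual R Y) =
      ∑ j, LinearMap.toSpanSingleton R _ (f j) ∘ₗ Module.Dual.eval R Y (b j) := by
    ext g y
    conv_lhs => rw [LinearMap.id_apply, ← hbf y]
    simp [mul_comm]
  constructor
  · rw [injective_iff_map_eq_zero]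
    intro β hβ
    have eval_eq_zero (y : Y) : extMap X i (Module.Dual.eval R Y y) β = 0 :=
      LinearMap.congr_fun hβ y
    rw [← extMap_id β, id_dual, map_sum, LinearMap.sum_apply]
    exact Finset.sum_eq_zero fun j _ => by rw [extMap_comp, eval_eq_zero, map_zero]
  · intro h
    refine ⟨∑ j, extMap X i (LinearMap.toSpanSingleton R _ (f j)) (h (b j)), ?_⟩
    ext y
    have eval_comp (j : Fin n) : Module.Dual.eval R Y y ∘ₗ LinearMap.toSpanSingleton R _ (f j) =
        f j y • LinearMap.id := by
      ext
      simp
    conv_rhs => rw [← hbf y, map_sum]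
    simp only [map_sum, LinearMap.sum_apply, extDualPairing_apply, ← extMap_comp, eval_comp,
      map_smul, LinearMap.smul_apply, extMap_id]

lemma subsingleton_modExt_of_finite_projective [Module.Finite R Y] [Module.Projective R Y]
    [Subsingleton (ModExt R X R i)] : Subsingleton (ModExt R X Y i) :=
  have : Subsingleton (ModExt R X (Module.Dual R (Module.Dual R Y)) i) :=
    extDualPairing_bijective_of_projective.1.subsingleton
  (extCongrRight X i (Module.evalEquiv R Y)).toEquiv.subsingleton

end ExtDualPairing

/-- `0 → A → B → C → 0` is a short exact sequence of modules. -/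
structure IsShortExact {R A B C : Type u} [CommRing R] [AddCommGroup A] [Module R A]
    [AddCommGroup B] [Module R B] [AddCommGroup C] [Module R C] (f : A →ₗ[R] B) (g : B →ₗ[R] C) :
    Prop where
  injective : Function.Injective f
  exact : Function.Exact f g
  surjective : Function.Surjective g

namespace IsShortExact

variable {R : Type u} [CommRing R] {X Y A B C : Type u}
  [AddCommGroup X] [Module R X] [AddCommGroup Y] [Module R Y] [AddCommGroup A] [Module R A]
  [AddCommGroup B] [Module R B] [AddCommGroup C] [Module R C] {f : A →ₗ[R] B} {g : B →ₗ[R] C}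
  {i : ℕ}

lemma of_surjective (hg : Function.Surjective g) : IsShortExact (LinearMap.ker g).subtype g :=
  ⟨Subtype.val_injective, LinearMap.exact_subtype_ker_map g, hg⟩

lemma of_injective (hf : Function.Injective f) : IsShortExact f (LinearMap.range f).mkQ :=
  ⟨hf, LinearMap.exact_map_mkQ_range f, Submodule.mkQ_surjective _⟩

lemma comp_eq_zero (h : IsShortExact f g) : ModuleCat.ofHom f ≫ ModuleCat.ofHom g = 0 :=
  ModuleCat.hom_ext h.exact.linearMap_comp_eq_zero

lemma shortExact (h : IsShortExact f g) : (ShortComplex.mk _ _ h.comp_eq_zero).ShortExact :=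
  ModuleCat.shortComplex_shortExact _ h.exact h.injective h.surjective

lemma exact_extMap (h : IsShortExact f g) :
    Function.Exact (extMap X i f) (extMap X i g) := fun x =>
  ⟨Ext.covariant_sequence_exact₂ _ h.shortExact x, by
    rintro ⟨y, rfl⟩
    rw [← extMap_comp, h.exact.linearMap_comp_eq_zero, map_zero, LinearMap.zero_apply]⟩

lemma extMap_injective (h : IsShortExact f g)
    (hC : ∀ j, j + 1 = i → Subsingleton (ModExt R X C j)) :
    Function.Injective (extMap X i f) := by
  cases i with
  | zero => exact extMap_zero_injective h.injective
  | succ j =>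
    rw [injective_iff_map_eq_zero]
    intro x hx
    obtain ⟨y, rfl⟩ := Ext.covariant_sequence_exact₁ _ h.shortExact x hx rfl
    rw [(hC j rfl).elim y 0, Ext.zero_comp]

lemma extMap_surjective (h : IsShortExact f g) [Subsingleton (ModExt R X A (i + 1))] :
    Function.Surjective (extMap X i g) := fun x =>
  Ext.covariant_sequence_exact₃ _ h.shortExact x rfl (Subsingleton.elim (α := ModExt R X A _) _ _)

lemma subsingleton_modExt_right (h : IsShortExact f g) [Subsingleton (ModExt R X B i)]
    [Subsingleton (ModExt R X A (i + 1))] : Subsingleton (ModExt R X C i) :=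
  h.extMap_surjective.subsingleton

/-- The connecting map `Ext^i(A, Y) → Ext^{i+1}(C, Y)` of the contravariant long exact sequence. -/
noncomputable def connecting (h : IsShortExact f g) (Y : Type u) [AddCommGroup Y] [Module R Y]
    (i : ℕ) : ModExt R A Y i →ₗ[R] ModExt R C Y (i + 1) :=
  h.shortExact.extClass.precompOfLinear R _ (add_comm 1 i)

lemma connecting_injective (h : IsShortExact f g) [Subsingleton (ModExt R B Y i)] :
    Function.Injective (h.connecting Y i) := by
  rw [injective_iff_map_eq_zero]
  intro x hx
  obtain ⟨y, rfl⟩ := Ext.contravariant_sequence_exact₁ h.shortExact _ x (add_comm 1 i) hx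
  rw [Subsingleton.elim (α := ModExt R B Y i) y 0, Ext.comp_zero]

lemma connecting_surjective (h : IsShortExact f g) [Subsingleton (ModExt R B Y (i + 1))] :
    Function.Surjective (h.connecting Y i) := fun x =>
  Ext.contravariant_sequence_exact₃ h.shortExact _ x
    (Subsingleton.elim (α := ModExt R B Y _) _ _) (add_comm 1 i)

/-- Dimension shifting. -/
noncomputable def connectingEquiv (h : IsShortExact f g) [Module.Projective R B] (Y : Type u)
    [AddCommGroup Y] [Module R Y] (i : ℕ) :
    ModExt R A Y (i + 1) ≃ₗ[R] ModExt R C Y (i + 2) :=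
  have (j : ℕ) : Subsingleton (ModExt R B Y (j + 1)) := subsingleton_modExt_succ_of_projective
  LinearEquiv.ofBijective (h.connecting Y (i + 1)) ⟨h.connecting_injective, h.connecting_surjective⟩

/-- The connecting map `A* → Ext^1(C, R)`. -/
noncomputable def dualConnecting (h : IsShortExact f g) : Module.Dual R A →ₗ[R] ModExt R C R 1 :=
  h.connecting R 0 ∘ₗ
    ((ModuleCat.homLinearEquiv (M := ModuleCat.of R A) (N := ModuleCat.of R R) (S := R)).symm ≪≫ₗ
      Ext.linearEquiv₀.symm).toLinearMap

lemma exact_dualConnecting (h : IsShortExact f g) :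
    Function.Exact f.dualMap h.dualConnecting := by
  refine fun φ => ⟨fun hφ => ?_, ?_⟩
  · obtain ⟨y, hy⟩ := Ext.contravariant_sequence_exact₁ h.shortExact (ModuleCat.of R R)
      (Ext.mk₀ (ModuleCat.ofHom φ)) (n₁ := 1) rfl hφ
    obtain ⟨ψ, rfl⟩ := (Ext.mk₀_bijective _ _).2 y
    rw [Ext.mk₀_comp_mk₀] at hy
    exact ⟨ψ.hom, congrArg ModuleCat.Hom.hom ((Ext.mk₀_bijective _ _).1 hy)⟩
  · rintro ⟨ψ, rfl⟩
    change h.shortExact.extClass.comp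
      (Ext.mk₀ (ModuleCat.ofHom f ≫ ModuleCat.ofHom ψ)) (add_comm 1 0) = 0
    rw [← Ext.mk₀_comp_mk₀, ← Ext.comp_assoc_of_second_deg_zero]
    exact (congrArg (Ext.comp · _ (add_comm 1 0)) h.shortExact.extClass_comp).trans
      (Ext.zero_comp _ _ _ _ _)

lemma dualConnecting_surjective (h : IsShortExact f g) [Subsingleton (ModExt R B R 1)] :
    Function.Surjective h.dualConnecting :=
  h.connecting_surjective.comp (LinearEquiv.surjective _)

lemma exact_dualMap (h : IsShortExact f g) : Function.Exact g.dualMap f.dualMap :=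
  LinearMap.exact_lcomp_of_exact_of_surjective R h.exact h.surjective

lemma dual (h : IsShortExact f g) [Subsingleton (ModExt R C R 1)] :
    IsShortExact g.dualMap f.dualMap :=
  ⟨LinearMap.dualMap_injective_of_surjective h.surjective, h.exact_dualMap,
    fun φ => (h.exact_dualConnecting φ).1 (Subsingleton.elim _ _)⟩

lemma subsingleton_modExt_one_of_dualMap_surjective (h : IsShortExact f g)
    [Subsingleton (ModExt R B R 1)] (hf : Function.Surjective f.dualMap) :
    Subsingleton (ModExt R C R 1) := by
  refine subsingleton_of_forall_eq 0 fun x => ?_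
  obtain ⟨φ, rfl⟩ := h.dualConnecting_surjective x
  exact (h.exact_dualConnecting φ).2 (hf φ)

end IsShortExact

section GradeGE

variable {R : Type u} [CommRing R] {X Y A B C : Type u}
  [AddCommGroup X] [Module R X] [AddCommGroup Y] [Module R Y] [AddCommGroup A] [Module R A]
  [AddCommGroup B] [Module R B] [AddCommGroup C] [Module R C] {f : A →ₗ[R] B} {g : B →ₗ[R] C}
  {i t : ℕ}

/-- The grade of the pair `(X, N)` is at least `t`: `Ext^j(X, N) = 0` for all `j < t`. For `X` the
residue field of a local ring this says that `N` has depth at least `t`. -/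
def GradeGE (R : Type u) [CommRing R] (X N : Type u) [AddCommGroup X] [Module R X]
    [AddCommGroup N] [Module R N] (t : ℕ) : Prop :=
  ∀ j < t, Subsingleton (ModExt R X N j)

lemma gradeGE_zero : GradeGE R X Y 0 := fun _ hj => absurd hj (Nat.not_lt_zero _)

lemma GradeGE.mono (h : GradeGE R X Y t) {s : ℕ} (hst : s ≤ t) : GradeGE R X Y s :=
  fun j hj => h j (hj.trans_le hst)

lemma GradeGE.congr (h : GradeGE R X A t) (e : A ≃ₗ[R] B) : GradeGE R X B t := fun j hj =>
  have := h j hj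
  (extCongrRight X j e).symm.toEquiv.subsingleton

lemma GradeGE.of_finite_projective (h : GradeGE R X R t) [Module.Finite R Y]
    [Module.Projective R Y] : GradeGE R X Y t := fun j hj =>
  have := h j hj
  subsingleton_modExt_of_finite_projective

lemma IsShortExact.gradeGE_left (h : IsShortExact f g) (hB : GradeGE R X B (t + 1))
    (hC : GradeGE R X C t) : GradeGE R X A (t + 1) := fun j hj =>
  have := hB j hj
  (h.extMap_injective fun k hk => hC k (by lia)).subsingleton

lemma GradeGE.one_of_injective (h : GradeGE R X B 1) (hf : Function.Injective f) :
    GradeGE R X A 1 :=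
  (IsShortExact.of_injective hf).gradeGE_left h gradeGE_zero

lemma IsShortExact.subsingleton_modExt_left_iff (h : IsShortExact f g)
    (hB : GradeGE R X B (i + 2)) :
    Subsingleton (ModExt R X A (i + 1)) ↔ Subsingleton (ModExt R X C i) := by
  have hBi := hB i (by lia)
  have hBi_succ := hB (i + 1) (by lia)
  refine ⟨fun _ => h.subsingleton_modExt_right, fun hC => ?_⟩
  exact (h.extMap_injective fun j hj => by rwa [Nat.succ_injective hj]).subsingleton

end GradeGE

section SemiGorensteinProjective

variable {R : Type u} [CommRing R] {X A B C : Type u}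
  [AddCommGroup X] [Module R X] [AddCommGroup A] [Module R A]
  [AddCommGroup B] [Module R B] [AddCommGroup C] [Module R C] {f : A →ₗ[R] B} {g : B →ₗ[R] C}
  {t : ℕ}

/-- `Ext^i(Y, R) = 0` for all `i > 0`. -/
def IsSemiGorensteinProjective (R : Type u) [CommRing R] (Y : Type u) [AddCommGroup Y]
    [Module R Y] : Prop :=
  ∀ i, Subsingleton (ModExt R Y R (i + 1))

lemma IsSemiGorensteinProjective.of_projective [Module.Projective R A] :
    IsSemiGorensteinProjective R A :=
  fun _ => subsingleton_modExt_succ_of_projective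

lemma IsShortExact.isSemiGorensteinProjective_left (h : IsShortExact f g)
    (hB : IsSemiGorensteinProjective R B) (hC : IsSemiGorensteinProjective R C) :
    IsSemiGorensteinProjective R A := fun i =>
  have := hB i
  have := hC (i + 1)
  h.connecting_injective.subsingleton

lemma IsSemiGorensteinProjective.exists_isShortExact_dual [Module.Finite R A]
    (hA : IsSemiGorensteinProjective R A) :
    ∃ (m : ℕ) (π : (Fin m → R) →ₗ[R] A), Function.Surjective π ∧
      IsSemiGorensteinProjective R (LinearMap.ker π) ∧
      IsShortExact π.dualMap (LinearMap.ker π).subtype.dualMap := by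
  obtain ⟨m, π, hπ⟩ := Module.Finite.exists_fin' R A
  have ses := IsShortExact.of_surjective hπ
  have := hA 0
  exact ⟨m, π, hπ, ses.isSemiGorensteinProjective_left .of_projective hA, ses.dual⟩

theorem GradeGE.dual_of_isSemiGorensteinProjective [IsNoetherianRing R]
    (hX : GradeGE R X R t) : ∀ {Y : Type u} [AddCommGroup Y] [Module R Y] [Module.Finite R Y],
      IsSemiGorensteinProjective R Y → GradeGE R X (Module.Dual R Y) t := by
  induction t with
  | zero => exact fun _ => gradeGE_zero
  | succ t ih =>
    intro Y _ _ _ hY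
    obtain ⟨m, π, -, hK, ses_dual⟩ := hY.exists_isShortExact_dual
    exact ses_dual.gradeGE_left hX.of_finite_projective (ih (hX.mono t.le_succ) hK)

theorem extDualPairing_injective [IsNoetherianRing R] {Y : Type u} [AddCommGroup Y] [Module R Y]
    [Module.Finite R Y] (hX : GradeGE R X R t) (hY : IsSemiGorensteinProjective R Y) :
    Function.Injective (extDualPairing (R := R) X Y t) := by
  obtain ⟨m, π, -, hK, ses_dual⟩ := hY.exists_isShortExact_dual
  have dual_injective : Function.Injective (extMap X t π.dualMap) :=
    ses_dual.extMap_injective fun j hj => hX.dual_of_isSemiGorensteinProjective hK j (by lia)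
  rw [injective_iff_map_eq_zero]
  intro β hβ
  refine (injective_iff_map_eq_zero _).1 dual_injective β
    ((injective_iff_map_eq_zero _).1 extDualPairing_bijective_of_projective.1 _ ?_)
  rw [extDualPairing_dualMap, hβ, LinearMap.zero_comp]

theorem extDualPairing_surjective [IsNoetherianRing R] {Y : Type u} [AddCommGroup Y] [Module R Y]
    [Module.Finite R Y] (hX : GradeGE R X R t) (hY : IsSemiGorensteinProjective R Y) :
    Function.Surjective (extDualPairing (R := R) X Y t) := by
  obtain ⟨m, π, hπ, hK, ses_dual⟩ := hY.exists_isShortExact_dual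
  intro h
  obtain ⟨α, hα⟩ := extDualPairing_bijective_of_projective.2 (h ∘ₗ π)
  have hα_ker : extMap X t (LinearMap.ker π).subtype.dualMap α = 0 := by
    refine (injective_iff_map_eq_zero _).1 (extDualPairing_injective hX hK) _ ?_
    rw [extDualPairing_dualMap, hα, LinearMap.comp_assoc, LinearMap.comp_ker_subtype,
      LinearMap.comp_zero]
  obtain ⟨β, rfl⟩ := (ses_dual.exact_extMap α).1 hα_ker
  rw [extDualPairing_dualMap] at hα
  exact ⟨β, (LinearMap.cancel_right hπ).1 hα⟩

end SemiGorensteinProjective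

section DualCoker

variable {R : Type u} [CommRing R] {X A B C : Type u}
  [AddCommGroup X] [Module R X] [AddCommGroup A] [Module R A]
  [AddCommGroup B] [Module R B] [AddCommGroup C] [Module R C] {f : A →ₗ[R] B} {g : B →ₗ[R] C}

/-- The cokernel of `g* : C* → B*`. It is `λ C` when `g` is the projective cover of `C`, and
`Ext^1(C', R)` when `g` is the inclusion of the first syzygy of `C'` in a projective module. -/
abbrev DualCoker (g : B →ₗ[R] C) : Type u :=
  Module.Dual R B ⧸ LinearMap.range g.dualMap

namespace IsShortExact

/-- `Ext^1(C, R) = coker(B* → A*)`. -/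
noncomputable def dualCokerEquiv (h : IsShortExact f g) [Subsingleton (ModExt R B R 1)] :
    DualCoker f ≃ₗ[R] ModExt R C R 1 :=
  h.exact_dualConnecting.linearEquivOfSurjective h.dualConnecting_surjective

/-- The map `coker(C* → B*) → A*` induced by restriction along `f`. -/
def dualCokerToDual (h : IsShortExact f g) : DualCoker g →ₗ[R] Module.Dual R A :=
  (LinearMap.range g.dualMap).liftQ f.dualMap h.exact_dualMap.linearMap_ker_eq.ge

lemma isShortExact_dualCokerToDual (h : IsShortExact f g) [Subsingleton (ModExt R B R 1)] :
    IsShortExact h.dualCokerToDual h.dualConnecting where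
  injective := LinearMap.ker_eq_bot.1 <| Submodule.ker_liftQ_eq_bot' _ _
    h.exact_dualMap.linearMap_ker_eq.symm
  exact := LinearMap.exact_iff.2 <| by
    rw [dualCokerToDual, Submodule.range_liftQ, h.exact_dualConnecting.linearMap_ker_eq]
  surjective := h.dualConnecting_surjective

/-- If `Ext^1(C, R) = 0` then `coker(C* → B*) = A*`. -/
noncomputable def dualCokerEquivDual (h : IsShortExact f g) [Subsingleton (ModExt R C R 1)] :
    DualCoker g ≃ₗ[R] Module.Dual R A :=
  h.exact_dualMap.linearEquivOfSurjective h.dual.surjective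

end IsShortExact

lemma GradeGE.one_dual [Module.Finite R A] (hX : GradeGE R X R 1) :
    GradeGE R X (Module.Dual R A) 1 := by
  obtain ⟨m, π, hπ⟩ := Module.Finite.exists_fin' R A
  exact hX.of_finite_projective.one_of_injective (LinearMap.dualMap_injective_of_surjective hπ)

variable [IsNoetherianRing R]

lemma GradeGE.two_dual [Module.Finite R A] (hX : GradeGE R X R 2) :
    GradeGE R X (Module.Dual R A) 2 := by
  obtain ⟨m, π, hπ⟩ := Module.Finite.exists_fin' R A
  have : Subsingleton (ModExt R (Fin m → R) R 1) := subsingleton_modExt_succ_of_projective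
  exact (IsShortExact.of_injective (LinearMap.dualMap_injective_of_surjective hπ)).gradeGE_left
    hX.of_finite_projective ((hX.mono one_le_two).one_dual.one_of_injective
      (IsShortExact.of_surjective hπ).isShortExact_dualCokerToDual.injective)

theorem gradeGE_dualCoker_and_subsingleton_iff (m : ℕ) :
    ∀ {M P : Type u} [AddCommGroup M] [Module R M] [AddCommGroup P] [Module R P]
      [Module.Finite R P] [Module.Projective R P] {π : P →ₗ[R] M}, Function.Surjective π →
      (∀ i < m, Subsingleton (ModExt R M R (i + 1))) → GradeGE R X R (m + 2) →
      GradeGE R X (DualCoker π) (m + 1) ∧ (Subsingleton (ModExt R X (DualCoker π) (m + 1)) ↔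
        Subsingleton (ModExt R X (ModExt R M R (m + 1)) 0)) := by
  induction m with
  | zero =>
    intro M P _ _ _ _ _ _ π hπ _ hX
    have : Subsingleton (ModExt R P R 1) := subsingleton_modExt_succ_of_projective
    have ses := (IsShortExact.of_surjective hπ).isShortExact_dualCokerToDual
    exact ⟨((hX.mono one_le_two).one_dual).one_of_injective ses.injective,
      ses.subsingleton_modExt_left_iff hX.two_dual⟩
  | succ m ih =>
    intro M P _ _ _ _ _ _ π hπ hM hX
    have := hM 0 m.succ_pos
    have ses := IsShortExact.of_surjective hπ
    obtain ⟨k, ρ, hρ⟩ := Module.Finite.exists_fin' R (LinearMap.ker π)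
    have ses_dual := IsShortExact.of_injective (LinearMap.dualMap_injective_of_surjective hρ)
    have free_grade : GradeGE R X (Module.Dual R (Fin k → R)) (m + 3) := hX.of_finite_projective
    have hK (i : ℕ) (hi : i < m) : Subsingleton (ModExt R (LinearMap.ker π) R (i + 1)) :=
      have := hM (i + 1) (by lia)
      (ses.connectingEquiv R i).toEquiv.subsingleton
    obtain ⟨ih_grade, ih_iff⟩ := ih hρ hK (hX.mono (by lia))
    refine ⟨(ses_dual.gradeGE_left (free_grade.mono (by lia)) ih_grade).congr
      ses.dualCokerEquivDual.symm, ?_⟩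
    calc Subsingleton (ModExt R X (DualCoker π) (m + 2))
        ↔ Subsingleton (ModExt R X (Module.Dual R (LinearMap.ker π)) (m + 2)) :=
          (extCongrRight X _ ses.dualCokerEquivDual).toEquiv.subsingleton_congr
      _ ↔ Subsingleton (ModExt R X (DualCoker ρ) (m + 1)) :=
          ses_dual.subsingleton_modExt_left_iff free_grade
      _ ↔ Subsingleton (ModExt R X (ModExt R (LinearMap.ker π) R (m + 1)) 0) := ih_iff
      _ ↔ Subsingleton (ModExt R X (ModExt R M R (m + 2)) 0) :=
          (extCongrRight X 0 (ses.connectingEquiv R m)).toEquiv.subsingleton_congr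

end DualCoker

section GDim

variable {R : Type u} [CommRing R] {M N : Type u} [AddCommGroup M] [Module R M]
  [AddCommGroup N] [Module R N]

lemma isSemiGorensteinProjective_iff :
    IsSemiGorensteinProjective R M ↔ ∀ i : ℕ, 0 < i → Subsingleton (extM R i M R) := by
  simp only [subsingleton_extM_iff]
  refine ⟨fun h i hi => ?_, fun h i => h (i + 1) i.succ_pos⟩
  obtain ⟨j, rfl⟩ := Nat.exists_eq_add_one_of_ne_zero hi.ne'
  exact h j

lemma IsSemiGorensteinProjective.congr (h : IsSemiGorensteinProjective R M) (e : M ≃ₗ[R] N) :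
    IsSemiGorensteinProjective R N := fun i =>
  have := h i
  (extCongrLeft R (i + 1) e).symm.toEquiv.subsingleton

lemma isGDimZero_iff : IsGDimZero R M ↔ Module.Finite R M ∧ Module.IsReflexive R M ∧
    IsSemiGorensteinProjective R M ∧ IsSemiGorensteinProjective R (Module.Dual R M) := by
  simp only [isSemiGorensteinProjective_iff, IsGDimZero]
  exact and_congr_right fun _ => and_congr_left fun _ => ⟨fun h => ⟨h⟩, fun h => h.1⟩

lemma IsGDimZero.congr (h : IsGDimZero R M) (e : M ≃ₗ[R] N) : IsGDimZero R N := by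
  obtain ⟨finite, reflexive, ext_vanish, ext_dual_vanish⟩ := isGDimZero_iff.1 h
  exact isGDimZero_iff.2 ⟨Module.Finite.equiv e, Module.equiv e, ext_vanish.congr e,
    ext_dual_vanish.congr e.symm.dualMap⟩

lemma IsGDimZero.of_projective [Module.Finite R M] [Module.Projective R M] : IsGDimZero R M :=
  isGDimZero_iff.2 ⟨inferInstance, inferInstance, .of_projective, .of_projective⟩

lemma GDimLE.congr {n : ℕ} (h : GDimLE R n (ModuleCat.of R M)) (e : M ≃ₗ[R] N) :
    GDimLE R n (ModuleCat.of R N) := by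
  cases n with
  | zero => exact IsGDimZero.congr h e
  | succ n =>
    obtain ⟨G, f, hG, hf, hK⟩ := h
    refine ⟨G, e.toLinearMap ∘ₗ f, hG, e.surjective.comp hf, ?_⟩
    rwa [LinearMap.ker_comp_of_ker_eq_bot f e.ker]

lemma GDimLE.subsingleton_modExt {n : ℕ} :
    ∀ {M : Type u} [AddCommGroup M] [Module R M], GDimLE R n (ModuleCat.of R M) →
      ∀ {i : ℕ}, n ≤ i → Subsingleton (ModExt R M R (i + 1)) := by
  induction n with
  | zero => exact fun h i _ => (isGDimZero_iff.1 h).2.2.1 i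
  | succ n ih =>
    intro M _ _ ⟨G, f, hG, hf, hK⟩ i hi
    obtain ⟨j, rfl⟩ := Nat.exists_eq_add_of_le' hi
    have := (isGDimZero_iff.1 hG).2.2.1 (j + n + 1)
    have := ih hK (Nat.le_add_left n j)
    exact (IsShortExact.of_surjective hf).connecting_surjective.subsingleton

lemma IsGDimZero.gradeGE [IsNoetherianRing R] {X : Type u} [AddCommGroup X] [Module R X] {t : ℕ}
    (hM : IsGDimZero R M) (hX : GradeGE R X R t) : GradeGE R X M t := by
  obtain ⟨_, _, -, ext_dual_vanish⟩ := isGDimZero_iff.1 hM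
  exact (hX.dual_of_isSemiGorensteinProjective ext_dual_vanish).congr (Module.evalEquiv R M).symm

lemma GDimLE.exists_last_not_subsingleton_modExt {g : ℕ} (hg : GDimLE R g (ModuleCat.of R M))
    {i : ℕ} (hi : ¬ Subsingleton (ModExt R M R (i + 1))) :
    ∃ s, i ≤ s ∧ ¬ Subsingleton (ModExt R M R (s + 1)) ∧
      ∀ j, s < j → Subsingleton (ModExt R M R (j + 1)) := by
  classical
  let nonvanishing (j : ℕ) : Prop := ¬ Subsingleton (ModExt R M R (j + 1))
  have hig : i ≤ g := not_lt.1 fun h => hi (hg.subsingleton_modExt h.le)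
  refine ⟨Nat.findGreatest nonvanishing g, Nat.le_findGreatest hig hi,
    Nat.findGreatest_spec (P := nonvanishing) hig hi, fun j hj => ?_⟩
  by_cases hjg : j ≤ g
  · exact not_not.1 (Nat.findGreatest_is_greatest hj hjg)
  · exact hg.subsingleton_modExt (not_le.1 hjg).le

end GDim

section GDimZeroOfVanishing

variable {R : Type u} [CommRing R] {A B C : Type u} [AddCommGroup A] [Module R A]
  [AddCommGroup B] [Module R B] [AddCommGroup C] [Module R C] {f : A →ₗ[R] B} {g : B →ₗ[R] C}

lemma IsShortExact.isReflexive_right (h : IsShortExact f g) [Module.IsReflexive R A]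
    [Module.IsReflexive R B] (hbidual : IsShortExact f.dualMap.dualMap g.dualMap.dualMap) :
    Module.IsReflexive R C := by
  refine ⟨(injective_iff_map_eq_zero _).2 fun c hc => ?_, fun ξ => ?_⟩
  · obtain ⟨b, rfl⟩ := h.surjective c
    obtain ⟨ζ, hζ⟩ := (hbidual.exact (Module.Dual.eval R B b)).1 hc
    obtain ⟨a, rfl⟩ := (Module.bijective_dual_eval R A).2 ζ
    rw [← (Module.bijective_dual_eval R B).1 hζ]
    exact h.exact.apply_apply_eq_zero a
  · obtain ⟨ζ, rfl⟩ := hbidual.surjective ξ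
    obtain ⟨b, rfl⟩ := (Module.bijective_dual_eval R B).2 ζ
    exact ⟨g b, rfl⟩

lemma IsShortExact.isGDimZero_right (h : IsShortExact f g) (hA : IsGDimZero R A)
    (hB : IsGDimZero R B) (hC : IsSemiGorensteinProjective R C) : IsGDimZero R C := by
  obtain ⟨-, _, -, ext_dual_A⟩ := isGDimZero_iff.1 hA
  obtain ⟨_, _, -, ext_dual_B⟩ := isGDimZero_iff.1 hB
  have := hC 0
  have := ext_dual_A 0
  exact isGDimZero_iff.2 ⟨Module.Finite.of_surjective g h.surjective,
    h.isReflexive_right h.dual.dual, hC,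
    h.dual.isSemiGorensteinProjective_left ext_dual_B ext_dual_A⟩

theorem GDimLE.isGDimZero_of_isSemiGorensteinProjective {n : ℕ} :
    ∀ {M : Type u} [AddCommGroup M] [Module R M], GDimLE R n (ModuleCat.of R M) →
      IsSemiGorensteinProjective R M → IsGDimZero R M := by
  induction n with
  | zero => exact fun h _ => h
  | succ n ih =>
    intro M _ _ ⟨G, f, hG, hf, hK⟩ hM
    have ses := IsShortExact.of_surjective hf
    exact ses.isGDimZero_right
      (ih hK (ses.isSemiGorensteinProjective_left (isGDimZero_iff.1 hG).2.2.1 hM)) hG hM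

end GDimZeroOfVanishing

section NumericalInvariants

variable {R : Type u} [CommRing R] {M : Type u} [AddCommGroup M] [Module R M] {n : ℕ}

lemma sInf_natCast_eq_iff {p : ℕ → Prop} :
    sInf {x : ℕ∞ | ∃ k : ℕ, x = k ∧ p k} = n ↔ p n ∧ ∀ k < n, ¬ p k := by
  constructor
  · intro h
    have hne : {x : ℕ∞ | ∃ k : ℕ, x = k ∧ p k}.Nonempty := by
      by_contra hempty
      rw [Set.not_nonempty_iff_eq_empty.1 hempty, sInf_empty] at h
      exact ENat.natCast_ne_top n h.symm
    obtain ⟨k, hk, hpk⟩ := csInf_mem hne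
    obtain rfl : n = k := ENat.natCast_inj.1 (h.symm.trans hk)
    refine ⟨hpk, fun k hkn hpk => hkn.not_ge (ENat.natCast_le_natCast.1 ?_)⟩
    exact h.symm.trans_le (sInf_le ⟨k, rfl, hpk⟩)
  · rintro ⟨hn, hlt⟩
    refine le_antisymm (sInf_le ⟨n, rfl, hn⟩) (le_sInf ?_)
    rintro _ ⟨k, rfl, hk⟩
    exact ENat.natCast_le_natCast.2 (not_lt.1 fun hkn => hlt k hkn hk)

lemma rgr_eq_natCast_succ_iff : rgr R M = (n + 1 : ℕ) ↔
    ¬ Subsingleton (ModExt R M R (n + 1)) ∧ ∀ i < n, Subsingleton (ModExt R M R (i + 1)) := by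
  rw [rgr, sInf_natCast_eq_iff]
  simp only [subsingleton_extM_iff, n.succ_pos, true_and, not_and, not_not]
  refine and_congr_right fun _ => ⟨fun h i hi => h _ (by lia) i.succ_pos, fun h i hi hi_pos => ?_⟩
  obtain ⟨j, rfl⟩ := Nat.exists_eq_add_one_of_ne_zero hi_pos.ne'
  exact h j (by lia)

lemma exists_eq_add_one_of_rgr_eq (h : rgr R M = n) : ∃ m, n = m + 1 :=
  Nat.exists_eq_add_one_of_ne_zero (sInf_natCast_eq_iff.1 h).1.1.ne'

lemma edepth_eq_natCast_iff {I : Ideal R} : edepth R I M = n ↔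
    ¬ Subsingleton (ModExt R (R ⧸ I) M n) ∧ GradeGE R (R ⧸ I) M n := by
  rw [edepth, sInf_natCast_eq_iff]
  simp only [subsingleton_extM_iff, not_not, GradeGE]

lemma edepth_congr {N : Type u} [AddCommGroup N] [Module R N] (I : Ideal R) (e : M ≃ₗ[R] N) :
    edepth R I M = edepth R I N := by
  simp only [edepth, subsingleton_extM_iff, (extCongrRight _ _ e).toEquiv.subsingleton_congr]

lemma exists_gDimLE_of_gDim_lt_top (h : GDim R M < ⊤) : ∃ g, GDimLE R g (ModuleCat.of R M) := by
  obtain ⟨_, ⟨g, -, hg⟩, -⟩ := sInf_lt_iff.1 h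
  exact ⟨g, hg⟩

lemma gDim_ne_zero_of_rgr_eq (h : rgr R M = n) : GDim R M ≠ 0 := fun hG => by
  obtain ⟨m, rfl⟩ := exists_eq_add_one_of_rgr_eq h
  have hM : GDimLE R 0 (ModuleCat.of R M) :=
    (sInf_natCast_eq_iff.1 (hG.trans Nat.cast_zero.symm)).1
  exact (rgr_eq_natCast_succ_iff.1 h).1 (hM.subsingleton_modExt m.zero_le)

end NumericalInvariants

section LinearMaps

variable {A : Type u} [CommRing A]

lemma exists_linearMap_quotient_apply_one_eq {Y : Type u} [AddCommGroup Y] [Module A Y]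
    {I : Ideal A} {c : Y} (hc : ∀ a ∈ I, a • c = 0) :
    ∃ η : A ⧸ I →ₗ[A] Y, η 1 = c :=
  ⟨I.liftQ (LinearMap.toSpanSingleton A Y c) hc, one_smul A c⟩

end LinearMaps

section LocalRing

open IsLocalRing

variable {A : Type u} [CommRing A] [IsLocalRing A] {X Y : Type u} [AddCommGroup X] [Module A X]
  [AddCommGroup Y] [Module A Y] {t : ℕ}

lemma exists_surjective_comp_eq_zero_of_not_surjective [Module.Finite A Y] {φ : X →ₗ[A] Y}
    (hφ : ¬ Function.Surjective φ) :
    ∃ θ : Y →ₗ[A] A ⧸ maximalIdeal A, Function.Surjective θ ∧ θ ∘ₗ φ = 0 := by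
  obtain ⟨N, hN, hle⟩ := (eq_top_or_exists_le_coatom (LinearMap.range φ)).resolve_left
    fun h => hφ (LinearMap.range_eq_top.1 h)
  obtain ⟨I, hI, ⟨e⟩⟩ := isSimpleModule_iff_quot_maximal.1 (isSimpleModule_iff_isCoatom.2 hN)
  obtain rfl := eq_maximalIdeal hI
  refine ⟨e.toLinearMap ∘ₗ N.mkQ, e.surjective.comp N.mkQ_surjective, ?_⟩
  rw [LinearMap.comp_assoc, LinearMap.range_le_ker_iff.1 (hle.trans N.ker_mkQ.ge),
    LinearMap.comp_zero]

variable [IsNoetherianRing A]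

lemma maximalIdeal_mem_associatedPrimes_iff :
    maximalIdeal A ∈ associatedPrimes A Y ↔
      ¬ Subsingleton (ModExt A (A ⧸ maximalIdeal A) Y 0) := by
  have hom_equiv : ModExt A (A ⧸ maximalIdeal A) Y 0 ≃ (A ⧸ maximalIdeal A →ₗ[A] Y) :=
    Ext.homEquiv₀.trans ModuleCat.homEquiv
  have : IsSimpleModule A (A ⧸ maximalIdeal A) :=
    isSimpleModule_iff_isCoatom.2 (maximalIdeal.isMaximal A).out
  rw [hom_equiv.subsingleton_congr, AssociatedPrimes.mem_iff,
    isAssociatedPrime_iff_exists_injective_linearMap, subsingleton_iff_forall_eq 0, not_forall]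
  refine (and_iff_right (maximalIdeal.isMaximal A).isPrime).trans (exists_congr fun f => ?_)
  refine ⟨fun hf hf0 => ?_, f.injective_or_eq_zero.resolve_right⟩
  exact not_subsingleton (A ⧸ maximalIdeal A) ⟨fun a b => hf (by rw [hf0]; rfl)⟩

lemma exists_ne_zero_extMap_dualMap_eq_zero [Module.Finite A X] [Module.Finite A Y]
    (hA : GradeGE A (A ⧸ maximalIdeal A) A t)
    (ht : ¬ Subsingleton (ModExt A (A ⧸ maximalIdeal A) A t))
    (hX : IsSemiGorensteinProjective A X) (hY : IsSemiGorensteinProjective A Y)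
    {φ : X →ₗ[A] Y} (hφ : ¬ Function.Surjective φ) :
    ∃ β : ModExt A (A ⧸ maximalIdeal A) (Module.Dual A Y) t,
      β ≠ 0 ∧ extMap _ t φ.dualMap β = 0 := by
  obtain ⟨θ, hθ, hθφ⟩ := exists_surjective_comp_eq_zero_of_not_surjective hφ
  have := not_subsingleton_iff_nontrivial.1 ht
  obtain ⟨c, hc⟩ := exists_ne (0 : ModExt A (A ⧸ maximalIdeal A) A t)
  have c_torsion : ∀ a ∈ maximalIdeal A, a • c = 0 := fun a ha =>
    smul_eq_zero_of_mem_annihilator (by rwa [Ideal.annihilator_quotient]) c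
  obtain ⟨η, hη⟩ := exists_linearMap_quotient_apply_one_eq c_torsion
  obtain ⟨β, hβ⟩ := extDualPairing_surjective hA hY (η ∘ₗ θ)
  refine ⟨β, ?_, (injective_iff_map_eq_zero _).1 (extDualPairing_injective hA hX) _ ?_⟩
  · rintro rfl
    obtain ⟨y, hy⟩ := hθ 1
    apply hc
    rw [← hη, ← hy, ← LinearMap.comp_apply, ← hβ, map_zero, LinearMap.zero_apply]
  · rw [extDualPairing_dualMap, hβ, LinearMap.comp_assoc, hθφ, LinearMap.comp_zero]

lemma IsShortExact.exists_not_subsingleton_modExt_residue {K G N : Type u} [AddCommGroup K]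
    [Module A K] [AddCommGroup G] [Module A G] [AddCommGroup N] [Module A N]
    {f : K →ₗ[A] G} {g : G →ₗ[A] N} (h : IsShortExact f g)
    (hA : GradeGE A (A ⧸ maximalIdeal A) A t)
    (ht : ¬ Subsingleton (ModExt A (A ⧸ maximalIdeal A) A t))
    (hK : IsGDimZero A K) (hG : IsGDimZero A G) (hN : ¬ Subsingleton (ModExt A N A 1)) :
    ∃ r, t = r + 1 ∧ ¬ Subsingleton (ModExt A (A ⧸ maximalIdeal A) N r) := by
  obtain ⟨_, _, -, ext_dual_K⟩ := isGDimZero_iff.1 hK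
  obtain ⟨_, _, ext_G, ext_dual_G⟩ := isGDimZero_iff.1 hG
  have := ext_G 0
  obtain ⟨β, hβ, hβf⟩ := exists_ne_zero_extMap_dualMap_eq_zero hA ht ext_dual_G ext_dual_K
    fun hf => hN (h.subsingleton_modExt_one_of_dualMap_surjective hf)
  by_contra! hr
  have f_injective : Function.Injective (extMap (A ⧸ maximalIdeal A) t f) :=
    h.extMap_injective fun j hj => hr j hj.symm
  obtain ⟨β, rfl⟩ := (extCongrRight _ t (Module.evalEquiv A K)).surjective β
  apply hβ
  rw [LinearEquiv.map_eq_zero_iff]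
  refine (injective_iff_map_eq_zero _).1 f_injective β
    ((extCongrRight _ t (Module.evalEquiv A G)).map_eq_zero_iff.1 ?_)
  calc extMap _ t (Module.evalEquiv A G).toLinearMap (extMap _ t f β)
      = extMap _ t ((Module.evalEquiv A G).toLinearMap ∘ₗ f) β := (extMap_comp _ _ _).symm
    _ = extMap _ t (f.dualMap.dualMap ∘ₗ (Module.evalEquiv A K).toLinearMap) β := rfl
    _ = 0 := (extMap_comp _ _ _).trans hβf

/-- The Auslander–Bridger formula `Gdim N + depth N = depth A`, with `s + 1` for `Gdim N`. -/
theorem GDimLE.exists_not_subsingleton_modExt_residue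
    (hA : GradeGE A (A ⧸ maximalIdeal A) A t)
    (ht : ¬ Subsingleton (ModExt A (A ⧸ maximalIdeal A) A t)) {s : ℕ} :
    ∀ {g : ℕ} {N : Type u} [AddCommGroup N] [Module A N], GDimLE A g (ModuleCat.of A N) →
      ¬ Subsingleton (ModExt A N A (s + 1)) → (∀ i, s < i → Subsingleton (ModExt A N A (i + 1))) →
      ∃ r, t = r + s + 1 ∧ ¬ Subsingleton (ModExt A (A ⧸ maximalIdeal A) N r) := by
  induction s with
  | zero =>
    intro g N _ _ hg hN hN_above
    cases g with
    | zero => exact absurd (hg.subsingleton_modExt le_rfl) hN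
    | succ g =>
      obtain ⟨G, f, hG, hf, hK⟩ := hg
      have ses := IsShortExact.of_surjective hf
      have ext_K : IsSemiGorensteinProjective A (LinearMap.ker f) := fun i =>
        have := (isGDimZero_iff.1 hG).2.2.1 i
        have := hN_above (i + 1) i.succ_pos
        ses.connecting_injective.subsingleton
      exact ses.exists_not_subsingleton_modExt_residue hA ht
        (hK.isGDimZero_of_isSemiGorensteinProjective ext_K) hG hN
  | succ s ih =>
    intro g N _ _ hg hN hN_above
    cases g with
    | zero => exact absurd (hg.subsingleton_modExt s.succ.zero_le) hN
    | succ g =>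
      obtain ⟨G, f, hG, hf, hK⟩ := hg
      have ses := IsShortExact.of_surjective hf
      have ext_G := (isGDimZero_iff.1 hG).2.2.1
      obtain ⟨r, rfl, hr⟩ := ih hK
        (fun _ => have := ext_G (s + 1); hN ses.connecting_surjective.subsingleton)
        (fun i hi => have := ext_G i; have := hN_above (i + 1) (by lia)
          ses.connecting_injective.subsingleton)
      have hGr := hG.gradeGE hA r (by lia)
      by_contra! hr_pred
      refine hr (ses.extMap_injective fun j hj => hr_pred j (by lia)).subsingleton

lemma GDimLE.subsingleton_modExt_of_depth_le
    (hA : GradeGE A (A ⧸ maximalIdeal A) A t)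
    (ht : ¬ Subsingleton (ModExt A (A ⧸ maximalIdeal A) A t))
    {g : ℕ} (hg : GDimLE A g (ModuleCat.of A Y)) {i : ℕ} (hi : t ≤ i) :
    Subsingleton (ModExt A Y A (i + 1)) := by
  by_contra hYi
  obtain ⟨s, his, hs, hs_above⟩ := hg.exists_last_not_subsingleton_modExt hYi
  obtain ⟨r, hr, -⟩ := hg.exists_not_subsingleton_modExt_residue hA ht hs hs_above
  lia

theorem GDimLE.gradeGE_residue_of_injective {M Q : Type u} [AddCommGroup M] [Module A M]
    [AddCommGroup Q] [Module A Q] [Module.Finite A Q] [Module.Projective A Q] {g : ℕ}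
    (hg : GDimLE A g (ModuleCat.of A M)) {j : M →ₗ[A] Q} (hj : Function.Injective j)
    {m : ℕ} (hm : ¬ Subsingleton (ModExt A M A (m + 1))) :
    GradeGE A (A ⧸ maximalIdeal A) A (m + 2) := by
  classical
  have ses := IsShortExact.of_injective hj
  have : Subsingleton (ModExt A Q A (m + 1)) := subsingleton_modExt_succ_of_projective
  have hcoker : GDimLE A (g + 1) (ModuleCat.of A (Q ⧸ LinearMap.range j)) :=
    ⟨ModuleCat.of A Q, (LinearMap.range j).mkQ, .of_projective, Submodule.mkQ_surjective _,
      hg.congr (LinearEquiv.ofInjective j hj ≪≫ₗ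
        LinearEquiv.ofEq _ _ (Submodule.ker_mkQ _).symm)⟩
  by_contra hgrade
  have hdepth : ∃ t, t < m + 2 ∧ ¬ Subsingleton (ModExt A (A ⧸ maximalIdeal A) A t) := by
    simpa only [GradeGE, not_forall, exists_prop] using hgrade
  obtain ⟨ht_lt, ht⟩ := Nat.find_spec hdepth
  have := hcoker.subsingleton_modExt_of_depth_le
    (fun i hi => not_not.1 fun hi' => Nat.find_min hdepth hi ⟨hi.trans ht_lt, hi'⟩) ht
    (Nat.lt_succ_iff.1 ht_lt)
  exact hm ses.connecting_injective.subsingleton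

theorem GDimLE.edepth_dualCoker_eq_iff {M P Q : Type u} [AddCommGroup M] [Module A M]
    [AddCommGroup P] [Module A P] [Module.Finite A P] [Module.Projective A P]
    [AddCommGroup Q] [Module A Q] [Module.Finite A Q] [Module.Projective A Q] {g n : ℕ}
    (hg : GDimLE A g (ModuleCat.of A M)) {j : M →ₗ[A] Q} (hj : Function.Injective j)
    {π : P →ₗ[A] M} (hπ : Function.Surjective π) (hn : rgr A M = n) :
    edepth A (maximalIdeal A) (DualCoker π) = n ↔
      maximalIdeal A ∈ associatedPrimes A (ModExt A M A n) := by
  obtain ⟨m, rfl⟩ := exists_eq_add_one_of_rgr_eq hn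
  obtain ⟨hm, ext_vanish⟩ := rgr_eq_natCast_succ_iff.1 hn
  obtain ⟨grade_dualCoker, vanish_iff⟩ := gradeGE_dualCoker_and_subsingleton_iff m hπ ext_vanish
    (hg.gradeGE_residue_of_injective hj hm)
  rw [edepth_eq_natCast_iff, and_iff_left grade_dualCoker, vanish_iff,
    maximalIdeal_mem_associatedPrimes_iff]

end LocalRing

section Localization

variable {R : Type u} [CommRing R] (S : Submonoid R) {X Y Z : Type u} [AddCommGroup X] [Module R X]
  [AddCommGroup Y] [Module R Y] [AddCommGroup Z] [Module R Z]

lemma localizedModule_hom_ext {V : Type u} [AddCommGroup V] [Module (Localization S) V]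
    {f g : LocalizedModule S X →ₗ[Localization S] V}
    (h : ∀ x, f (LocalizedModule.mk x 1) = g (LocalizedModule.mk x 1)) : f = g := by
  ext z
  induction z using LocalizedModule.induction_on with
  | _ x s =>
    have mk_eq_smul : LocalizedModule.mk x s =
        (Localization.mk 1 s : Localization S) • LocalizedModule.mk x (1 : S) := by
      rw [LocalizedModule.mk_smul_mk, one_smul, mul_one]
    rw [mk_eq_smul, map_smul, map_smul, h]

lemma IsShortExact.localize {f : X →ₗ[R] Y} {g : Y →ₗ[R] Z} (h : IsShortExact f g) :
    IsShortExact (LocalizedModule.map S f) (LocalizedModule.map S g) where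
  injective := LocalizedModule.map_injective S f h.injective
  exact := LocalizedModule.map_exact S f g h.exact
  surjective := LocalizedModule.map_surjective S g h.surjective

variable (X) in
/-- Localization commutes with the `R`-dual of a finitely presented module. -/
noncomputable def localizedDualEquiv [Module.FinitePresentation R X] :
    LocalizedModule S (Module.Dual R X) ≃ₗ[Localization S]
      Module.Dual (Localization S) (LocalizedModule S X) :=
  (IsLocalizedModule.iso S (IsLocalizedModule.mapExtendScalars S
    (LocalizedModule.mkLinearMap S X) (Algebra.linearMap R (Localization S))
    (Localization S))).extendScalarsOfIsLocalization S (Localization S)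

lemma localizedDualEquiv_mk_apply_mk [Module.FinitePresentation R X] (φ : Module.Dual R X)
    (x : X) : localizedDualEquiv S X (LocalizedModule.mk φ 1) (LocalizedModule.mk x 1) =
      algebraMap R (Localization S) (φ x) := by
  rw [localizedDualEquiv, LinearEquiv.extendScalarsOfIsLocalization_apply,
    IsLocalizedModule.iso_mk_one]
  exact IsLocalizedModule.map_apply S (LocalizedModule.mkLinearMap S X)
    (Algebra.linearMap R (Localization S)) φ x

lemma localizedDualEquiv_comp_map_dualMap [Module.FinitePresentation R X]
    [Module.FinitePresentation R Y] (f : X →ₗ[R] Y) :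
    (localizedDualEquiv S X).toLinearMap ∘ₗ LocalizedModule.map S f.dualMap =
      (LocalizedModule.map S f).dualMap ∘ₗ (localizedDualEquiv S Y).toLinearMap := by
  refine localizedModule_hom_ext S fun φ => localizedModule_hom_ext S fun x => ?_
  simp only [LinearMap.comp_apply, LinearEquiv.coe_coe, LocalizedModule.map_mk,
    LinearMap.dualMap_apply, localizedDualEquiv_mk_apply_mk]

lemma dualMap_localizedDualEquiv_comp_eval [Module.FinitePresentation R X]
    [Module.FinitePresentation R (Module.Dual R X)] :
    (localizedDualEquiv S X).toLinearMap.dualMap ∘ₗ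
        Module.Dual.eval (Localization S) (LocalizedModule S X) =
      (localizedDualEquiv S (Module.Dual R X)).toLinearMap ∘ₗ
        LocalizedModule.map S (Module.Dual.eval R X) := by
  refine localizedModule_hom_ext S fun x => localizedModule_hom_ext S fun φ => ?_
  simp only [LinearMap.comp_apply, LinearEquiv.coe_coe, LocalizedModule.map_mk,
    LinearMap.dualMap_apply, Module.Dual.eval_apply, localizedDualEquiv_mk_apply_mk]

lemma isReflexive_localizedModule [Module.FinitePresentation R X]
    [Module.FinitePresentation R (Module.Dual R X)] [Module.IsReflexive R X] :
    Module.IsReflexive (Localization S) (LocalizedModule S X) := by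
  have eval_bijective := Module.bijective_dual_eval R X
  refine ⟨(Function.Bijective.of_comp_iff' (localizedDualEquiv S X).dualMap.bijective _).1 ?_⟩
  have := congr_arg DFunLike.coe (dualMap_localizedDualEquiv_comp_eval S (X := X))
  rw [LinearMap.coe_comp, LinearMap.coe_comp] at this
  refine this ▸ (localizedDualEquiv S (Module.Dual R X)).bijective.comp
    ⟨LocalizedModule.map_injective S _ eval_bijective.1,
      LocalizedModule.map_surjective S _ eval_bijective.2⟩

/-- Localization commutes with the cokernel of a dual map. -/
noncomputable def localizedDualCokerEquiv [Module.FinitePresentation R X]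
    [Module.FinitePresentation R Y] (f : X →ₗ[R] Y) :
    LocalizedModule S (DualCoker f) ≃ₗ[Localization S] DualCoker (LocalizedModule.map S f) :=
  have exact : Function.Exact f.dualMap (LinearMap.range f.dualMap).mkQ :=
    LinearMap.exact_iff.2 (Submodule.ker_mkQ _)
  have exact_localized : Function.Exact (LocalizedModule.map S f.dualMap)
      (LocalizedModule.map S (LinearMap.range f.dualMap).mkQ) :=
    LocalizedModule.map_exact S _ _ exact
  have exact_dualMap : Function.Exact (LocalizedModule.map S f).dualMap
      (LocalizedModule.map S (LinearMap.range f.dualMap).mkQ ∘ₗ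
        (localizedDualEquiv S X).symm.toLinearMap) :=
    exact_localized.of_ladder_linearEquiv_of_exact (e₁ := localizedDualEquiv S Y)
      (e₂ := localizedDualEquiv S X) (e₃ := LinearEquiv.refl _ _)
      (localizedDualEquiv_comp_map_dualMap S f).symm
      (by rw [LinearMap.comp_assoc, LinearEquiv.symm_comp]; rfl)
  (exact_dualMap.linearEquivOfSurjective ((LocalizedModule.map_surjective S _
    (Submodule.mkQ_surjective _)).comp (localizedDualEquiv S X).symm.surjective)).symm

variable [IsNoetherianRing R]

theorem nonempty_localizedModExtEquiv (i : ℕ) :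
    ∀ (X : Type u) [AddCommGroup X] [Module R X] [Module.Finite R X],
      Nonempty (LocalizedModule S (ModExt R X R (i + 1)) ≃ₗ[Localization S]
        ModExt (Localization S) (LocalizedModule S X) (Localization S) (i + 1)) := by
  induction i with
  | zero =>
    intro X _ _ _
    obtain ⟨m, π, hπ⟩ := Module.Finite.exists_fin' R X
    have ses := IsShortExact.of_surjective hπ
    have : Module.FinitePresentation R (LinearMap.ker π) := Module.finitePresentation_of_finite R _
    have : Subsingleton (ModExt R (Fin m → R) R 1) := subsingleton_modExt_succ_of_projective
    have : Subsingleton (ModExt (Localization S) (LocalizedModule S (Fin m → R))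
      (Localization S) 1) := subsingleton_modExt_succ_of_projective
    exact ⟨(IsLocalizedModule.mapEquiv S (LocalizedModule.mkLinearMap S _)
      (LocalizedModule.mkLinearMap S _) (Localization S) ses.dualCokerEquiv).symm ≪≫ₗ
        localizedDualCokerEquiv S _ ≪≫ₗ (ses.localize S).dualCokerEquiv⟩
  | succ i ih =>
    intro X _ _ _
    obtain ⟨m, π, hπ⟩ := Module.Finite.exists_fin' R X
    have ses := IsShortExact.of_surjective hπ
    obtain ⟨e⟩ := ih (LinearMap.ker π)
    exact ⟨(IsLocalizedModule.mapEquiv S (LocalizedModule.mkLinearMap S _)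
      (LocalizedModule.mkLinearMap S _) (Localization S) (ses.connectingEquiv R i)).symm ≪≫ₗ
        e ≪≫ₗ (ses.localize S).connectingEquiv (Localization S) i⟩

lemma subsingleton_modExt_localizedModule [Module.Finite R X] {i : ℕ}
    [Subsingleton (ModExt R X R (i + 1))] :
    Subsingleton (ModExt (Localization S) (LocalizedModule S X) (Localization S) (i + 1)) := by
  obtain ⟨e⟩ := nonempty_localizedModExtEquiv S i X
  exact e.symm.toEquiv.subsingleton

lemma IsSemiGorensteinProjective.localize [Module.Finite R X]
    (h : IsSemiGorensteinProjective R X) :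
    IsSemiGorensteinProjective (Localization S) (LocalizedModule S X) := fun i =>
  have := h i
  subsingleton_modExt_localizedModule S

lemma IsGDimZero.localize (h : IsGDimZero R X) :
    IsGDimZero (Localization S) (LocalizedModule S X) := by
  obtain ⟨_, _, ext_vanish, ext_dual_vanish⟩ := isGDimZero_iff.1 h
  have : Module.FinitePresentation R X := Module.finitePresentation_of_finite R X
  have : Module.FinitePresentation R (Module.Dual R X) := Module.finitePresentation_of_finite R _
  exact isGDimZero_iff.2 ⟨inferInstance, isReflexive_localizedModule S, ext_vanish.localize S,
    (ext_dual_vanish.localize S).congr (localizedDualEquiv S X)⟩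

lemma GDimLE.localize {n : ℕ} : ∀ {X : Type u} [AddCommGroup X] [Module R X],
    GDimLE R n (ModuleCat.of R X) →
      GDimLE (Localization S) n (ModuleCat.of (Localization S) (LocalizedModule S X)) := by
  induction n with
  | zero => exact fun h => IsGDimZero.localize S h
  | succ n ih =>
    intro X _ _ ⟨G, f, hG, hf, hK⟩
    have ses := (IsShortExact.of_surjective hf).localize S
    exact ⟨ModuleCat.of (Localization S) (LocalizedModule S G), LocalizedModule.map S f,
      hG.localize S, ses.surjective, (ih hK).congr (LinearEquiv.ofInjective _ ses.injective ≪≫ₗ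
        LinearEquiv.ofEq _ _ ses.exact.linearMap_ker_eq.symm)⟩

open Module.associatedPrimes in
lemma mem_associatedPrimes_iff_maximalIdeal_mem (p : Ideal R) [p.IsPrime] :
    p ∈ associatedPrimes R X ↔ IsLocalRing.maximalIdeal (Localization.AtPrime p) ∈
      associatedPrimes (Localization.AtPrime p) (LocalizedModule p.primeCompl X) := by
  refine ⟨mem_associatedPrimes_atPrime_of_mem_associatedPrimes, fun h => ?_⟩
  rw [← Localization.AtPrime.under_maximalIdeal (I := p)]
  exact comap_mem_associatedPrimes_of_mem_associatedPrimes_of_isLocalizedModule_of_fg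
    p.primeCompl (LocalizedModule.mkLinearMap p.primeCompl X) _ h (IsNoetherian.noetherian _)

end Localization

section LocalInvariants

variable {R : Type u} [CommRing R] {M : Type u} [AddCommGroup M] [Module R M] {n : ℕ}

lemma locDepth_congr {N : Type u} [AddCommGroup N] [Module R N] (p : Ideal R) [p.IsPrime]
    (e : M ≃ₗ[R] N) : locDepth R p M = locDepth R p N :=
  edepth_congr _ (IsLocalizedModule.mapEquiv p.primeCompl (LocalizedModule.mkLinearMap _ M)
    (LocalizedModule.mkLinearMap _ N) (Localization.AtPrime p) e)

variable [IsNoetherianRing R] (p : Ideal R) [p.IsPrime]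

lemma isAssociatedPrime_modExt_iff_maximalIdeal_mem [Module.Finite R M] (i : ℕ) :
    IsAssociatedPrime p (ModExt R M R (i + 1)) ↔
      IsLocalRing.maximalIdeal (Localization.AtPrime p) ∈ associatedPrimes (Localization.AtPrime p)
        (ModExt (Localization.AtPrime p) (LocalizedModule p.primeCompl M)
          (Localization.AtPrime p) (i + 1)) := by
  obtain ⟨e⟩ := nonempty_localizedModExtEquiv p.primeCompl i M
  rw [← LinearEquiv.AssociatedPrimes.eq e]
  exact mem_associatedPrimes_iff_maximalIdeal_mem p

lemma locRgr_eq_of_isAssociatedPrime [Module.Finite R M] (hn : rgr R M = n)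
    (hp : IsAssociatedPrime p (ModExt R M R n)) : locRgr R p M = n := by
  obtain ⟨m, rfl⟩ := exists_eq_add_one_of_rgr_eq hn
  have ext_vanish := (rgr_eq_natCast_succ_iff.1 hn).2
  refine rgr_eq_natCast_succ_iff.2 ⟨fun _ => ?_, fun i hi => ?_⟩
  · exact not_isAssociatedPrime_of_subsingleton
      ((isAssociatedPrime_modExt_iff_maximalIdeal_mem p m).1 hp)
  · have := ext_vanish i hi
    exact subsingleton_modExt_localizedModule p.primeCompl

theorem locDepth_dualCoker_eq_iff {P Q : Type u} [AddCommGroup P] [Module R P]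
    [Module.Finite R P] [Module.Projective R P] [AddCommGroup Q] [Module R Q]
    [Module.Finite R Q] [Module.Projective R Q] (hfin : GDim R M < ⊤) {j : M →ₗ[R] Q}
    (hj : Function.Injective j) {π : P →ₗ[R] M} (hπ : Function.Surjective π)
    (hn : locRgr R p M = n) :
    locDepth R p (DualCoker π) = n ↔ IsAssociatedPrime p (ModExt R M R n) := by
  obtain ⟨g, hg⟩ := exists_gDimLE_of_gDim_lt_top hfin
  have : Module.Finite R M := Module.Finite.of_surjective π hπ
  have : Module.FinitePresentation R M := Module.finitePresentation_of_finite R M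
  have : Module.FinitePresentation R P := Module.finitePresentation_of_finite R P
  have depth_iff := (hg.localize p.primeCompl).edepth_dualCoker_eq_iff
    (LocalizedModule.map_injective p.primeCompl j hj)
    (LocalizedModule.map_surjective p.primeCompl π hπ) hn
  obtain ⟨m, rfl⟩ := exists_eq_add_one_of_rgr_eq hn
  rw [locDepth, edepth_congr _ (localizedDualCokerEquiv p.primeCompl π),
    isAssociatedPrime_modExt_iff_maximalIdeal_mem, ← depth_iff]

end LocalInvariants

section Linkage

variable {R : Type u} [CommRing R] {M : Type u} [AddCommGroup M] [Module R M]

/-- `λM = coker(M* → P₀*)`: the image of `P₀* → P₁*` is the quotient of `P₀*` by the kernel `M*`. -/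
noncomputable def dualCokerEquivRange {P₀ P₁ : Type u} [AddCommGroup P₀] [Module R P₀]
    [AddCommGroup P₁] [Module R P₁] {d : P₁ →ₗ[R] P₀} {ε : P₀ →ₗ[R] M} (hd : Function.Exact d ε)
    (hε : Function.Surjective ε) : DualCoker ε ≃ₗ[R] LinearMap.range d.dualMap :=
  Submodule.quotEquivOfEq _ _
    (LinearMap.exact_lcomp_of_exact_of_surjective R hd hε).linearMap_ker_eq.symm ≪≫ₗ
    d.dualMap.quotKerEquivRange

lemma IsHorizontallyLinked.exists_injective_projective (h : IsHorizontallyLinked R M) :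
    ∃ (Q : ModuleCat.{u} R) (_ : Module.Finite R Q) (_ : Module.Projective R Q)
      (j : M →ₗ[R] Q), Function.Injective j := by
  obtain ⟨F, G, ⟨e⟩⟩ := h
  have := G.finite 1
  have := G.projective 1
  exact ⟨ModuleCat.of R (Module.Dual R (G.P 1)), inferInstance, inferInstance,
    (LinearMap.range (G.d 0).dualMap).subtype ∘ₗ e.symm.toLinearMap,
    Subtype.val_injective.comp e.symm.injective⟩

end Linkage

section Statements

variable (R : Type u) [CommRing R] [IsNoetherianRing R]

theorem stmt1_general {M P₀ P₁ Q : Type u} [AddCommGroup M] [Module R M]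
    [AddCommGroup P₀] [Module R P₀] [Module.Finite R P₀] [Module.Projective R P₀]
    [AddCommGroup P₁] [Module R P₁]
    [AddCommGroup Q] [Module R Q] [Module.Finite R Q] [Module.Projective R Q]
    {d : P₁ →ₗ[R] P₀} {ε : P₀ →ₗ[R] M} (hd : Function.Exact d ε) (hε : Function.Surjective ε)
    {j : M →ₗ[R] Q} (hj : Function.Injective j) (hfin : GDim R M < ⊤) {n : ℕ}
    (hn : rgr R M = (n : ℕ∞)) :
    {p : Ideal R | IsAssociatedPrime p (extM R n M R)} =
      {p : Ideal R | ∃ h : p.IsPrime, haveI := h;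
        locGDim R p M ≠ 0 ∧ locDepth R p (LinearMap.range d.dualMap) = (n : ℕ∞) ∧
          locRgr R p M = (n : ℕ∞)} := by
  have : Module.Finite R M := Module.Finite.of_surjective ε hε
  have depth_iff (p : Ideal R) [p.IsPrime] (hp : locRgr R p M = n) :
      locDepth R p (LinearMap.range d.dualMap) = n ↔ IsAssociatedPrime p (ModExt R M R n) := by
    rw [← locDepth_congr p (dualCokerEquivRange hd hε)]
    exact locDepth_dualCoker_eq_iff p hfin hj hε hp
  refine (LinearEquiv.AssociatedPrimes.eq (extMLinearEquiv M R n)).trans (Set.ext fun p => ?_)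
  constructor
  · intro (hp : IsAssociatedPrime p _)
    have := hp.isPrime
    have hrgr := locRgr_eq_of_isAssociatedPrime p hn hp
    exact ⟨hp.isPrime, gDim_ne_zero_of_rgr_eq hrgr, (depth_iff p hrgr).2 hp, hrgr⟩
  · rintro ⟨_, -, hdepth, hrgr⟩
    exact (depth_iff p hrgr).1 hdepth

theorem stmt1 (M : Type u) [AddCommGroup M] [Module R M] [Module.Finite R M]
    (F : MinRes R M) (hHL : IsHorizontallyLinked R M)
    (h0 : 0 < GDim R M) (hfin : GDim R M < ⊤) (n : ℕ) (hn : rgr R M = (n : ℕ∞)) :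
    {p : Ideal R | IsAssociatedPrime p (extM R n M R)} =
      {p : Ideal R | ∃ h : p.IsPrime, haveI := h;
        locGDim R p M ≠ 0 ∧ locDepth R p F.lambdaMod = (n : ℕ∞) ∧
          locRgr R p M = (n : ℕ∞)} := by
  obtain ⟨Q, _, _, j, hj⟩ := hHL.exists_injective_projective
  have := F.finite 0
  have := F.projective 0
  exact stmt1_general R (LinearMap.exact_iff.2 F.exact0.symm) F.surj hj hfin hn

end Statements
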